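/- The constraint-readiness problem is undecidable: there exist a set Π of procedures with safe scope and a single acyclic tgd σ such that it is undecidable, given a finite instance I, whether there exists a finite sequence P_1,...,P_n of procedures from Π such that every instance in outcomes_{P_1,...,P_n}(I) satisfies σ. -/

import Mathlib

/-- Domain of values. -/
abbrev Val := ℕ
/-- Variables. -/
abbrev Var := ℕ
/-- Relation names. -/
abbrev RelName := ℕ
/-- A relational instance assigns a set of tuples to each relation name. -/
abbrev Instance := RelName → Set (List Val)

/-- Instance extension (inclusion). -/
def Instance.le (I J : Instance) : Prop := ∀ R, I R ⊆ J R

/-- A relational atom `R(x₁,…,xₖ)`. -/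
structure Atom where
  rel : RelName
  args : List Var

/-- Satisfaction of an atom under an assignment. -/
def holdsAtom (I : Instance) (ν : Var → Val) (a : Atom) : Prop :=
  a.args.map ν ∈ I a.rel

/-- A tuple-generating dependency, given by its body and head conjunctions. -/
structure TGD where
  body : List Atom
  head : List Atom

/-- Variables occurring in the body of a tgd. -/
def TGD.bodyVar (t : TGD) (v : Var) : Prop := ∃ a ∈ t.body, v ∈ a.args

/-- Satisfaction of a tgd: every assignment satisfying the body extends to one
satisfying the head. -/
def satTGD (I : Instance) (t : TGD) : Prop :=
  ∀ ν : Var → Val, (∀ a ∈ t.body, holdsAtom I ν a) →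
    ∃ ν' : Var → Val, (∀ v, t.bodyVar v → ν' v = ν v) ∧ ∀ a ∈ t.head, holdsAtom I ν' a

/-- A full tgd has no existential variables in its head. -/
def FullTGD (t : TGD) : Prop := ∀ a ∈ t.head, ∀ v ∈ a.args, t.bodyVar v

/-- A set of tgds is acyclic: the relation-dependency graph (edge from a body
relation to a head relation) has no cycle, witnessed by a rank function. -/
def AcyclicTGDs (ts : List TGD) : Prop :=
  ∃ rank : RelName → ℕ, ∀ t ∈ ts, ∀ a ∈ t.body, ∀ b ∈ t.head, rank a.rel < rank b.rel

/-- Finiteness of an instance (finitely many facts overall). -/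
def FiniteInst (I : Instance) : Prop := {p : RelName × List Val | p.2 ∈ I p.1}.Finite

/-- Relations appearing in heads of a set of tgds (the scope of a safe-scope procedure). -/
def headRels (ts : List TGD) : Set RelName := { R | ∃ t ∈ ts, ∃ b ∈ t.head, b.rel = R }

/-- Outcomes of applying a procedure with safe scope (identified with its set of
postcondition tgds): extensions of `I` satisfying the tgds, where all relations
outside the scope (the head relations) are unchanged. -/
def safeOutcomes (ts : List TGD) (I : Instance) : Set Instance :=
  { J | Instance.le I J ∧ (∀ t ∈ ts, satTGD J t) ∧ ∀ R, R ∉ headRels ts → I R = J R }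

/-- Outcomes of a sequence of procedures with safe scope. -/
def safeSeqOutcomes : List (List TGD) → Instance → Set Instance
  | [], I => {I}
  | Γ :: rest, I => ⋃ J ∈ safeOutcomes Γ I, safeSeqOutcomes rest J

/-- A boolean conjunctive query: a conjunction of atoms, all variables existential. -/
abbrev BCQ := List Atom

/-- Satisfaction of a boolean conjunctive query. -/
def holdsBCQ (I : Instance) (q : BCQ) : Prop :=
  ∃ ν : Var → Val, ∀ a ∈ q, holdsAtom I ν a

/-- The set of instances represented by a scoped knowledge base `(I, Γ, Scope)`. -/
def repSKB (I : Instance) (Γ : List TGD) (Scope : Set RelName) : Set Instance :=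
  { J | Instance.le I J ∧ (∀ t ∈ Γ, satTGD J t) ∧ ∀ R, R ∉ Scope → I R = J R }

/-- Minimal members of a set of instances. -/
def MinimalIn (S : Set Instance) (J : Instance) : Prop :=
  J ∈ S ∧ ∀ K ∈ S, Instance.le K J → K = J

/-- The set of facts of an instance. -/
def tupleSet (I : Instance) : Set (RelName × List Val) := {p | p.2 ∈ I p.1}

/-- Encoding of finite instances as lists of facts (for computability). -/
abbrev FinInst := List (RelName × List Val)

/-- The instance encoded by a list of facts. -/
def toInstance (L : FinInst) : Instance := fun R => { t | (R, t) ∈ L }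

/-- A conjunctive query with free variables. -/
structure CQuery where
  free : List Var
  body : List Atom

/-- Answers of a conjunctive query over an instance. -/
def answers (q : CQuery) (I : Instance) : Set (List Val) :=
  { l | ∃ ν : Var → Val, (∀ a ∈ q.body, holdsAtom I ν a) ∧ l = q.free.map ν }

/-- A procedure whose pre- and postconditions are tgds, with a scope and
preservation queries. -/
structure Proc where
  scope : Set RelName
  pre : List TGD
  post : List TGD
  pres : List CQuery

/-- Possible outcomes of applying a procedure: the preconditions hold on `I`,
the postconditions hold on the outcome, out-of-scope relations are unchanged
and answers to the preservation queries are preserved. -/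
def procOutcomes (P : Proc) (I : Instance) : Set Instance :=
  { J | (∀ t ∈ P.pre, satTGD I t) ∧ (∀ t ∈ P.post, satTGD J t) ∧
        (∀ R, R ∉ P.scope → I R = J R) ∧ ∀ q ∈ P.pres, answers q I ⊆ answers q J }

/-!
Each tgd of a possibly cyclic set is split in two: one procedure fires all tgds, reading from the
current copy of each relation and writing to its next copy, and a second one copies the results
back. Both are acyclic, and alternating them performs parallel chase steps. As the chase yields a
universal model, a conjunctive query can be forced to hold in all outcomes iff it holds in every
model of the tgds into which the input maps homomorphically.

Such tgds can describe the evaluation of a list program: existential tgds provide successors and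
lists, and full tgds compute the evaluation relation bottom-up. Hence readiness encodes the halting
problem of any fixed program, and some program has an undecidable halting problem.
-/

namespace ConstraintReadiness

/-- Homomorphisms of instances; no value is required to be fixed. -/
def IsHom (f : Val → Val) (I J : Instance) : Prop :=
  ∀ R, ∀ s ∈ I R, s.map f ∈ J R

/-- `J` extends `I` by head facts for every assignment satisfying the body of a tgd of `Γ` in `I`;
it may contain further facts. -/
def IsChaseStep (Γ : List TGD) (I J : Instance) : Prop :=
  I ≤ J ∧ ∀ t ∈ Γ, ∀ ν : Var → Val, (∀ a ∈ t.body, holdsAtom I ν a) →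
    ∃ ν' : Var → Val, (∀ v, t.bodyVar v → ν' v = ν v) ∧ ∀ a ∈ t.head, holdsAtom J ν' a

theorem holdsAtom_mono {I J : Instance} (h : I ≤ J) {ν : Var → Val} {a : Atom}
    (ha : holdsAtom I ν a) : holdsAtom J ν a :=
  h _ ha

theorem IsHom.holdsAtom_comp {f : Val → Val} {I J : Instance} (hf : IsHom f I J) {ν : Var → Val}
    {a : Atom} (ha : holdsAtom I ν a) : holdsAtom J (f ∘ ν) a := by
  simpa only [holdsAtom, List.map_map] using hf _ _ ha

theorem satTGD_of_forall {I : Instance} {t : TGD}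
    (h : ∀ ν : Var → Val, (∀ a ∈ t.body, holdsAtom I ν a) → ∀ a ∈ t.head, holdsAtom I ν a) :
    satTGD I t :=
  fun ν hν => ⟨ν, fun _ _ => rfl, h ν hν⟩

theorem holdsAtom_of_fullTGD {I : Instance} {t : TGD} (ht : FullTGD t) (h : satTGD I t)
    {ν : Var → Val} (hν : ∀ a ∈ t.body, holdsAtom I ν a) {a : Atom} (ha : a ∈ t.head) :
    holdsAtom I ν a := by
  obtain ⟨ν', hν', hhead⟩ := h ν hν
  have key := hhead a ha
  rwa [holdsAtom, List.map_congr_left fun v hv => hν' v (ht a ha v hv)] at key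

theorem exists_forall_holdsAtom_of_iSup {F : ℕ → Instance} (hF : Monotone F) {ν : Var → Val}
    {q : List Atom} (hq : ∀ a ∈ q, holdsAtom (⨆ n, F n) ν a) :
    ∃ n, ∀ a ∈ q, holdsAtom (F n) ν a := by
  have eventually_holds : ∀ a ∈ q, ∀ᶠ n in Filter.atTop, holdsAtom (F n) ν a := by
    intro a ha
    obtain ⟨m, hm⟩ : ∃ m, holdsAtom (F m) ν a := by
      simpa only [holdsAtom, iSup_apply, Set.iSup_eq_iUnion, Set.mem_iUnion] using hq a ha
    exact Filter.eventually_atTop.2 ⟨m, fun n hmn => holdsAtom_mono (hF hmn) hm⟩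
  exact (q.finite_toSet.eventually_all.2 eventually_holds).exists

section Chase

variable (Γ : List TGD)

/-- A tgd of `Γ` together with values for its body variables only, so that there are countably many
triggers and each can name its own nulls. -/
abbrev Trigger : Type :=
  Σ t : {t // t ∈ Γ}, {v // t.1.bodyVar v} → Val

instance finite_bodyVar (t : TGD) : Finite {v // t.bodyVar v} := by
  refine (t.body.finite_toSet.biUnion fun a _ => a.args.finite_toSet).subset fun v hv => ?_
  obtain ⟨a, ha, hva⟩ := hv
  exact Set.mem_biUnion ha hva

instance countable_trigger : Countable (Trigger Γ) := by
  have : Finite {t // t ∈ Γ} := Γ.finite_toSet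
  infer_instance

variable {Γ}

/-- The null introduced at stage `n` of the chase for a trigger and an existential variable. The
first component of a value is its level: `0` for constants, `n + 1` for the nulls of stage `n`. -/
noncomputable def null (n : ℕ) (p : Trigger Γ × Var) : Val :=
  Nat.pair (n + 1) ((exists_injective_nat (Trigger Γ × Var)).choose p)

theorem null_injective (n : ℕ) : Function.Injective (null (Γ := Γ) n) := fun _ _ h =>
  (exists_injective_nat (Trigger Γ × Var)).choose_spec (Nat.pair_eq_pair.1 h).2

theorem unpair_null_fst (n : ℕ) (p : Trigger Γ × Var) : (null n p).unpair.1 = n + 1 := by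
  rw [null, Nat.unpair_pair]

open Classical in
/-- The assignment of a trigger, extended by the nulls of stage `n`. -/
noncomputable def Trigger.assign (n : ℕ) (τ : Trigger Γ) (v : Var) : Val :=
  if hv : τ.1.1.bodyVar v then τ.2 ⟨v, hv⟩ else null n (τ, v)

theorem Trigger.assign_of_not_bodyVar {n : ℕ} {τ : Trigger Γ} {v : Var}
    (hv : ¬ τ.1.1.bodyVar v) : τ.assign n v = null n (τ, v) :=
  dif_neg hv

/-- The body of the trigger holds in `I`. -/
def Trigger.IsActive (τ : Trigger Γ) (n : ℕ) (I : Instance) : Prop :=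
  ∀ a ∈ τ.1.1.body, holdsAtom I (τ.assign n) a

theorem exists_trigger_assign_eq {t : TGD} (ht : t ∈ Γ) (n : ℕ) {I : Instance} {ν : Var → Val}
    (hν : ∀ a ∈ t.body, holdsAtom I ν a) :
    ∃ τ : Trigger Γ, τ.1.1 = t ∧ τ.IsActive n I ∧ ∀ v, t.bodyVar v → τ.assign n v = ν v := by
  let τ : Trigger Γ := ⟨⟨t, ht⟩, fun v => ν v⟩
  have assign_eq : ∀ v, t.bodyVar v → τ.assign n v = ν v := fun v hv => dif_pos hv
  refine ⟨τ, rfl, fun a ha => ?_, assign_eq⟩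
  rw [holdsAtom, List.map_congr_left fun v hv => assign_eq v ⟨a, ha, hv⟩]
  exact hν a ha

variable (Γ) in
/-- One parallel step of the oblivious chase: all active triggers fire. -/
def chaseStep (n : ℕ) (I : Instance) : Instance := fun R =>
  I R ∪ {s | ∃ τ : Trigger Γ, τ.IsActive n I ∧
    ∃ a ∈ τ.1.1.head, a.rel = R ∧ a.args.map (τ.assign n) = s}

variable (Γ) in
/-- The stages of the chase of `I`, with a value `x` of `I` represented by `Nat.pair 0 x` to keep
the constants apart from all nulls. -/
def chase (I : Instance) : ℕ → Instance
  | 0 => fun R => List.map (Nat.pair 0) '' I R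
  | n + 1 => chaseStep Γ n (chase I n)

theorem isHom_chase_zero (I : Instance) : IsHom (Nat.pair 0) I (chase Γ I 0) :=
  fun _ _ hs => Set.mem_image_of_mem _ hs

theorem chase_monotone (I : Instance) : Monotone (chase Γ I) :=
  monotone_nat_of_le_succ fun _ _ => Set.subset_union_left

/-- All values in `I` have level at most `n`, so the nulls of stage `n` are fresh for `I`. -/
def LevelLE (n : ℕ) (I : Instance) : Prop :=
  ∀ R, ∀ s ∈ I R, ∀ x ∈ s, x.unpair.1 ≤ n

theorem LevelLE.le_of_isActive {n : ℕ} {I : Instance} (hI : LevelLE n I) {τ : Trigger Γ}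
    (hτ : τ.IsActive n I) {v : Var} (hv : τ.1.1.bodyVar v) : (τ.assign n v).unpair.1 ≤ n := by
  obtain ⟨a, ha, hva⟩ := hv
  exact hI _ _ (hτ a ha) _ (List.mem_map_of_mem hva)

theorem LevelLE.succ_chaseStep {n : ℕ} {I : Instance} (hI : LevelLE n I) :
    LevelLE (n + 1) (chaseStep Γ n I) := by
  rintro R s (hs | ⟨τ, hτ, a, -, -, rfl⟩) x hx
  · exact (hI R s hs x hx).trans n.le_succ
  · obtain ⟨v, -, rfl⟩ := List.mem_map.1 hx
    by_cases hv : τ.1.1.bodyVar v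
    · exact (hI.le_of_isActive hτ hv).trans n.le_succ
    · rw [Trigger.assign_of_not_bodyVar hv, unpair_null_fst]

theorem levelLE_chase (I : Instance) (n : ℕ) : LevelLE n (chase Γ I n) := by
  induction n with
  | zero =>
    rintro R _ ⟨s, -, rfl⟩ x hx
    obtain ⟨y, -, rfl⟩ := List.mem_map.1 hx
    rw [Nat.unpair_pair]
  | succ n ih => exact ih.succ_chaseStep

theorem satTGD_iSup_chase (I : Instance) {t : TGD} (ht : t ∈ Γ) :
    satTGD (⨆ n, chase Γ I n) t := by
  intro ν hν
  obtain ⟨n, hn⟩ := exists_forall_holdsAtom_of_iSup (chase_monotone I) hν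
  obtain ⟨τ, rfl, hτ, assign_eq⟩ := exists_trigger_assign_eq ht n hn
  refine ⟨τ.assign n, assign_eq, fun a ha => ?_⟩
  have hstep : holdsAtom (chase Γ I (n + 1)) (τ.assign n) a := Or.inr ⟨τ, hτ, a, ha, rfl, rfl⟩
  exact holdsAtom_mono (le_iSup (chase Γ I) (n + 1)) hstep

theorem exists_isHom_chaseStep {n : ℕ} {I J K : Instance} {f : Val → Val} (hI : LevelLE n I)
    (hf : IsHom f I J) (hJK : IsChaseStep Γ J K) : ∃ g, IsHom g (chaseStep Γ n I) K := by
  have exists_witness : ∀ τ : Trigger Γ, ∃ w : Var → Val, τ.IsActive n I →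
      (∀ v, τ.1.1.bodyVar v → w v = f (τ.assign n v)) ∧
        ∀ a ∈ τ.1.1.head, holdsAtom K w a := by
    intro τ
    by_cases hτ : τ.IsActive n I
    · obtain ⟨w, hw⟩ := hJK.2 _ τ.1.2 _ fun a ha => hf.holdsAtom_comp (hτ a ha)
      exact ⟨w, fun _ => hw⟩
    · exact ⟨f, fun h => absurd h hτ⟩
  choose w hw using exists_witness
  let g : Val → Val := Function.extend (null n) (fun p => w p.1 p.2) f
  have g_null : ∀ τ v, g (null n (τ, v)) = w τ v := fun τ v =>
    (null_injective n).extend_apply _ _ _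
  have g_of_le : ∀ x : Val, x.unpair.1 ≤ n → g x = f x := by
    intro x hx
    refine Function.extend_apply' _ _ _ ?_
    rintro ⟨p, rfl⟩
    rw [unpair_null_fst] at hx
    omega
  refine ⟨g, ?_⟩
  rintro R s (hs | ⟨τ, hτ, a, ha, rfl, rfl⟩)
  · rw [List.map_congr_left fun x hx => g_of_le x (hI R s hs x hx)]
    exact hJK.1 R (hf R s hs)
  · have g_assign : g ∘ τ.assign n = w τ := by
      funext v
      by_cases hv : τ.1.1.bodyVar v
      · rw [Function.comp_apply, g_of_le _ (hI.le_of_isActive hτ hv), (hw τ hτ).1 v hv]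
      · rw [Function.comp_apply, Trigger.assign_of_not_bodyVar hv, g_null]
    rw [List.map_map, g_assign]
    exact (hw τ hτ).2 a ha

end Chase

section Simulation

/-- The relation holding the current stage of the simulated relation `R`. -/
def current (R : RelName) : RelName := 2 * R

/-- The relation holding the head facts produced for the simulated relation `R`. -/
def next (R : RelName) : RelName := 2 * R + 1

/-- The atom over another relation with the same arguments. -/
def renameRel (f : RelName → RelName) (a : Atom) : Atom := ⟨f a.rel, a.args⟩

variable (Γ : List TGD)

/-- The procedure applying all tgds of `Γ` once, from current to next relations. -/
def fireProc : List TGD :=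
  Γ.map fun t => ⟨t.body.map (renameRel current), t.head.map (renameRel next)⟩

/-- The full tgd copying the facts matching the atom `a` from the next to the current relation. -/
def copyTGD (a : Atom) : TGD := ⟨[renameRel next a], [renameRel current a]⟩

/-- The procedure making the facts produced by `fireProc Γ` current. -/
def copyProc : List TGD :=
  (Γ.flatMap TGD.head).map copyTGD

/-- The two acyclic procedures that simulate the possibly cyclic set `Γ`. -/
def simProcs : List (List TGD) := [fireProc Γ, copyProc Γ]

/-- The query `q` on the current relations, as a tgd with empty body. -/
def goalTGD (q : BCQ) : TGD := ⟨[], q.map (renameRel current)⟩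

/-- The input with all its facts current. -/
def currentInput (L : FinInst) : FinInst := L.map fun p => (current p.1, p.2)

/-- The simulated instance. -/
def currentInstance (J : Instance) : Instance := fun R => J (current R)

/-- Some sequence of procedures from `Pi` makes `σ` true in all outcomes from `L`. -/
def IsReady (Pi : List (List TGD)) (σ : TGD) (L : FinInst) : Prop :=
  ∃ seq : List (List TGD), (∀ Δ ∈ seq, Δ ∈ Pi) ∧
    ∀ J ∈ safeSeqOutcomes seq (toInstance L), satTGD J σ

theorem acyclicTGDs_fireProc : AcyclicTGDs (fireProc Γ) := by
  refine ⟨fun R => R % 2, ?_⟩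
  simp only [fireProc, List.forall_mem_map, renameRel, current, next]
  omega

theorem acyclicTGDs_copyProc : AcyclicTGDs (copyProc Γ) := by
  refine ⟨fun R => (R + 1) % 2, ?_⟩
  simp only [copyProc, copyTGD, List.forall_mem_map, List.forall_mem_singleton, renameRel, current,
    next]
  omega

theorem acyclicTGDs_of_mem_simProcs : ∀ Δ ∈ simProcs Γ, AcyclicTGDs Δ :=
  List.forall_mem_cons.2
    ⟨acyclicTGDs_fireProc Γ, List.forall_mem_singleton.2 (acyclicTGDs_copyProc Γ)⟩

theorem fullTGD_copyTGD (a : Atom) : FullTGD (copyTGD a) := by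
  rintro _ hb v hv
  obtain rfl := List.mem_singleton.1 hb
  exact ⟨renameRel next a, List.mem_singleton_self _, hv⟩

theorem satTGD_goalTGD {J : Instance} {q : BCQ} :
    satTGD J (goalTGD q) ↔ holdsBCQ (currentInstance J) q := by
  constructor
  · intro h
    obtain ⟨ν, -, hν⟩ := h (fun _ => 0) fun _ ha => absurd ha List.not_mem_nil
    exact ⟨ν, fun a ha => hν _ (List.mem_map_of_mem ha)⟩
  · rintro ⟨ν, hν⟩ _ -
    exact ⟨ν, fun v ⟨_, ha, _⟩ => absurd ha List.not_mem_nil, List.forall_mem_map.2 hν⟩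

theorem currentInstance_toInstance (L : FinInst) :
    currentInstance (toInstance (currentInput L)) = toInstance L := by
  funext R
  ext s
  simp [currentInstance, toInstance, currentInput, current]

variable {Γ}

theorem isChaseStep_of_mem_safeOutcomes {I J K : Instance} (hJ : J ∈ safeOutcomes (fireProc Γ) I)
    (hK : K ∈ safeOutcomes (copyProc Γ) J) :
    IsChaseStep Γ (currentInstance I) (currentInstance K) := by
  obtain ⟨hIJ, hfire, -⟩ := hJ
  obtain ⟨hJK, hcopy, -⟩ := hK
  refine ⟨fun R => (hIJ _).trans (hJK _), fun t ht ν hν => ?_⟩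
  obtain ⟨ν', hν', hhead⟩ := hfire _ (List.mem_map_of_mem ht) ν
    (List.forall_mem_map.2 fun a ha => hIJ _ (hν a ha))
  refine ⟨ν', fun v ⟨a, ha, hv⟩ => hν' v ⟨_, List.mem_map_of_mem ha, hv⟩, fun a ha => ?_⟩
  have hnext : holdsAtom K ν' (renameRel next a) := hJK _ (hhead _ (List.mem_map_of_mem ha))
  have hsat : satTGD K (copyTGD a) :=
    hcopy _ (List.mem_map_of_mem (List.mem_flatMap.2 ⟨t, ht, ha⟩))
  exact holdsAtom_of_fullTGD (fullTGD_copyTGD a) hsat (List.forall_mem_singleton.2 hnext)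
    (List.mem_singleton_self _)

variable (Γ) in
/-- The sequence of procedures simulating `n` steps of the chase. -/
def rounds : ℕ → List (List TGD)
  | 0 => []
  | n + 1 => fireProc Γ :: copyProc Γ :: rounds n

theorem mem_simProcs_of_mem_rounds {n : ℕ} {Δ : List TGD} (h : Δ ∈ rounds Γ n) :
    Δ ∈ simProcs Γ := by
  induction n with
  | zero => cases h
  | succ n ih =>
    simp only [rounds, simProcs, List.mem_cons] at h ih ⊢
    tauto

theorem exists_isHom_chase_of_mem_rounds {I : Instance} {m n : ℕ} {f : Val → Val} {J K : Instance}
    (hf : IsHom f (chase Γ I m) (currentInstance J)) (hK : K ∈ safeSeqOutcomes (rounds Γ n) J) :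
    ∃ g, IsHom g (chase Γ I (m + n)) (currentInstance K) := by
  induction n generalizing m f J with
  | zero =>
    obtain rfl : K = J := hK
    exact ⟨f, hf⟩
  | succ n ih =>
    simp only [rounds, safeSeqOutcomes, Set.mem_iUnion] at hK
    obtain ⟨J₁, hJ₁, J₂, hJ₂, hK⟩ := hK
    obtain ⟨g, hg⟩ := exists_isHom_chaseStep (levelLE_chase I m) hf
      (isChaseStep_of_mem_safeOutcomes hJ₁ hJ₂)
    rw [Nat.add_comm n 1, ← Nat.add_assoc]
    exact ih hg hK

theorem isHom_chase_zero_toInstance (L : FinInst) :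
    IsHom (fun x => x.unpair.2) (chase Γ (toInstance L) 0)
      (currentInstance (toInstance (currentInput L))) := by
  rw [currentInstance_toInstance]
  rintro R _ ⟨s, hs, rfl⟩
  simpa [Function.comp_def] using hs

theorem isReady_of_forall_model {q : BCQ} {L : FinInst}
    (h : ∀ (M : Instance) (f : Val → Val), IsHom f (toInstance L) M → (∀ t ∈ Γ, satTGD M t) →
      holdsBCQ M q) :
    IsReady (simProcs Γ) (goalTGD q) (currentInput L) := by
  have isHom_iSup : IsHom (Nat.pair 0) (toInstance L) (⨆ n, chase Γ (toInstance L) n) :=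
    fun R s hs => le_iSup (chase Γ (toInstance L)) 0 R (isHom_chase_zero _ R s hs)
  obtain ⟨ν, hν⟩ := h _ _ isHom_iSup fun _ => satTGD_iSup_chase _
  obtain ⟨n, hn⟩ := exists_forall_holdsAtom_of_iSup (chase_monotone _) hν
  refine ⟨rounds Γ n, fun _ => mem_simProcs_of_mem_rounds, fun K hK => satTGD_goalTGD.2 ?_⟩
  obtain ⟨g, hg⟩ := exists_isHom_chase_of_mem_rounds (isHom_chase_zero_toInstance L) hK
  rw [Nat.zero_add] at hg
  exact ⟨g ∘ ν, fun a ha => hg.holdsAtom_comp (hn a ha)⟩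

theorem exists_mem_safeOutcomes_le {Δ : List TGD} {I M : Instance} (hIM : I ≤ M)
    (hM : ∀ t ∈ Δ, satTGD M t) : ∃ J ∈ safeOutcomes Δ I, J ≤ M := by
  classical
  let J : Instance := fun R => if R ∈ headRels Δ then M R else I R
  have hIJ : I ≤ J := fun R => by
    dsimp only [J]
    split_ifs
    exacts [hIM R, le_rfl]
  have hJM : J ≤ M := fun R => by
    dsimp only [J]
    split_ifs
    exacts [le_rfl, hIM R]
  refine ⟨J, ⟨hIJ, fun t ht ν hν => ?_, fun R hR => (if_neg hR).symm⟩, hJM⟩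
  obtain ⟨ν', hν', hhead⟩ := hM t ht ν fun a ha => holdsAtom_mono hJM (hν a ha)
  refine ⟨ν', hν', fun a ha => ?_⟩
  have hrel : J a.rel = M a.rel := if_pos ⟨t, ht, a, ha, rfl⟩
  rw [holdsAtom, hrel]
  exact hhead a ha

theorem exists_mem_safeSeqOutcomes_le {seq : List (List TGD)} {I M : Instance} (hIM : I ≤ M)
    (hM : ∀ Δ ∈ seq, ∀ t ∈ Δ, satTGD M t) : ∃ J ∈ safeSeqOutcomes seq I, J ≤ M := by
  induction seq generalizing I with
  | nil => exact ⟨I, rfl, hIM⟩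
  | cons Δ seq ih =>
    obtain ⟨hΔ, hseq⟩ := List.forall_mem_cons.1 hM
    obtain ⟨J, hJ, hJM⟩ := exists_mem_safeOutcomes_le hIM hΔ
    obtain ⟨K, hK, hKM⟩ := ih hJM hseq
    exact ⟨K, Set.mem_biUnion hJ hK, hKM⟩

/-- The instance whose current and next relations both agree with those of `M`. -/
def doubled (M : Instance) : Instance := fun R => M (R / 2)

theorem doubled_current (M : Instance) (R : RelName) : doubled M (current R) = M R := by
  rw [doubled, current, Nat.mul_div_cancel_left R two_pos]

theorem doubled_next (M : Instance) (R : RelName) : doubled M (next R) = M R := by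
  rw [doubled, next, Nat.mul_add_div two_pos, Nat.div_eq_of_lt one_lt_two, Nat.add_zero]

theorem holdsAtom_doubled_current {M : Instance} {ν : Var → Val} {a : Atom} :
    holdsAtom (doubled M) ν (renameRel current a) ↔ holdsAtom M ν a := by
  rw [holdsAtom, renameRel, doubled_current, holdsAtom]

theorem holdsAtom_doubled_next {M : Instance} {ν : Var → Val} {a : Atom} :
    holdsAtom (doubled M) ν (renameRel next a) ↔ holdsAtom M ν a := by
  rw [holdsAtom, renameRel, doubled_next, holdsAtom]

theorem bodyVar_map_renameRel {f : RelName → RelName} {t : TGD} {l : List Atom} {v : Var} :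
    (⟨t.body.map (renameRel f), l⟩ : TGD).bodyVar v ↔ t.bodyVar v := by
  simp [TGD.bodyVar, renameRel]

theorem satTGD_doubled {M : Instance} (hM : ∀ t ∈ Γ, satTGD M t) :
    ∀ Δ ∈ simProcs Γ, ∀ t ∈ Δ, satTGD (doubled M) t := by
  refine List.forall_mem_cons.2 ⟨List.forall_mem_map.2 fun t ht => ?_,
    List.forall_mem_singleton.2 (List.forall_mem_map.2 fun a _ => ?_)⟩
  · intro ν hν
    simp only [List.forall_mem_map, holdsAtom_doubled_current, holdsAtom_doubled_next,
      bodyVar_map_renameRel] at hν ⊢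
    exact hM t ht ν hν
  · refine satTGD_of_forall fun ν hν => ?_
    simpa only [copyTGD, List.forall_mem_singleton, holdsAtom_doubled_current,
      holdsAtom_doubled_next] using hν

theorem IsReady.holdsBCQ_of_model {q : BCQ} {L : FinInst} {M : Instance}
    (h : IsReady (simProcs Γ) (goalTGD q) (currentInput L)) (hLM : toInstance L ≤ M)
    (hM : ∀ t ∈ Γ, satTGD M t) : holdsBCQ M q := by
  obtain ⟨seq, hseq, hgoal⟩ := h
  have input_le : toInstance (currentInput L) ≤ doubled M := by
    intro R s hs
    obtain ⟨⟨R, s⟩, hp, ⟨⟩⟩ := List.mem_map.1 hs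
    rw [doubled_current]
    exact hLM R hp
  obtain ⟨J, hJ, hJM⟩ := exists_mem_safeSeqOutcomes_le input_le
    fun Δ hΔ => satTGD_doubled hM Δ (hseq Δ hΔ)
  obtain ⟨ν, hν⟩ := satTGD_goalTGD.1 (hgoal J hJ)
  exact ⟨ν, fun a ha => holdsAtom_doubled_current.1 (hJM _ (hν a ha))⟩

end Simulation

section Encoding

open Denumerable Encodable
open Turing (ToPartrec.Code)
open Turing.ToPartrec.Code

theorem mem_cons_eval_iff {f fs : ToPartrec.Code} {v r : List ℕ} :
    r ∈ (cons f fs).eval v ↔ ∃ a ∈ f.eval v, ∃ b ∈ fs.eval v, r = a.headI :: b := by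
  simp [cons_eval]

theorem mem_comp_eval_iff {f g : ToPartrec.Code} {v r : List ℕ} :
    r ∈ (comp f g).eval v ↔ ∃ a ∈ g.eval v, r ∈ f.eval a := by
  rw [comp_eval]
  exact Part.mem_bind_iff

theorem mem_case_eval_iff {f g : ToPartrec.Code} {v r : List ℕ} :
    r ∈ (case f g).eval v ↔ (v.headI = 0 ∧ r ∈ f.eval v.tail) ∨
      ∃ p, v.headI = p + 1 ∧ r ∈ g.eval (p :: v.tail) := by
  rw [case_eval]
  cases h : v.headI <;> simp [h]

theorem mem_fix_eval_iff {f : ToPartrec.Code} {v r : List ℕ} :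
    r ∈ (fix f).eval v ↔ ∃ w ∈ f.eval v, (w.headI = 0 ∧ r = w.tail) ∨
      (w.headI ≠ 0 ∧ r ∈ (fix f).eval w.tail) := by
  rw [fix_eval]
  refine PFun.mem_fix_iff.trans ?_
  simp only [Part.mem_map_iff]
  grind

theorem fix_eval_induction {f : ToPartrec.Code} {v r : List ℕ} {C : List ℕ → Prop}
    (h : r ∈ (fix f).eval v) (base : ∀ v w, w ∈ f.eval v → w.headI = 0 → r = w.tail → C v)
    (step : ∀ v w, w ∈ f.eval v → w.headI ≠ 0 → C w.tail → C v) : C v := by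
  rw [fix_eval] at h
  refine PFun.fixInduction' (C := C) h (fun v hv => ?_) fun v t _ hv ht => ?_
  · obtain ⟨w, hw, hr⟩ := (Part.mem_map_iff _).1 hv
    split_ifs at hr with h0
    exact base v w hw h0 (Sum.inl_injective hr).symm
  · obtain ⟨w, hw, hr⟩ := (Part.mem_map_iff _).1 hv
    split_ifs at hr with h0
    exact step v w hw h0 (Sum.inr_injective hr ▸ ht)

theorem exists_code_not_computablePred :
    ∃ c : ToPartrec.Code, ¬ ComputablePred fun n : ℕ => (c.eval [n]).Dom := by
  let f : ℕ →. ℕ := fun n => (ofNat Nat.Partrec.Code n).eval 0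
  have hf : Partrec f := Nat.Partrec.Code.eval_part.comp (Computable.ofNat _) (.const 0)
  obtain ⟨c, hc⟩ := exists_code (Nat.Partrec'.part_iff₁.2 hf)
  refine ⟨c, fun h => ComputablePred.halting_problem 0 ?_⟩
  have eval_dom_iff (p : Nat.Partrec.Code) :
      (p.eval 0).Dom ↔ (c.eval [encode p]).Dom := by
    have eval_eq : c.eval [encode p] = pure <$> f (encode p) :=
      hc (encode p ::ᵥ .nil)
    rw [eval_eq, show f (encode p) = p.eval 0 by simp only [f, ofNat_encode]]
    exact Iff.rfl
  exact ComputablePred.computable_of_manyOneReducible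
    ⟨encode, Computable.encode, eval_dom_iff⟩ h

/-- A numbering of list programs, used to give each program its own evaluation relation. -/
def codeIndex : ToPartrec.Code → ℕ
  | zero' => Nat.pair 0 0
  | succ => Nat.pair 1 0
  | tail => Nat.pair 2 0
  | cons f fs => Nat.pair 3 (Nat.pair (codeIndex f) (codeIndex fs))
  | comp f g => Nat.pair 4 (Nat.pair (codeIndex f) (codeIndex g))
  | case f g => Nat.pair 5 (Nat.pair (codeIndex f) (codeIndex g))
  | fix f => Nat.pair 6 (codeIndex f)

theorem codeIndex_inj {c d : ToPartrec.Code} : codeIndex c = codeIndex d ↔ c = d := by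
  induction c generalizing d <;> cases d <;> simp [codeIndex, Nat.pair_eq_pair, *]

/-- `zeroRel(z)`: `z` represents the number zero, and also the empty list. -/
def zeroRel : RelName := 0

/-- `succRel(x, s)`: `s` represents the successor of the number represented by `x`. -/
def succRel : RelName := 1

/-- `consRel(x, l, w)`: `w` represents the list with head `x` and tail `l`. -/
def consRel : RelName := 2

/-- `unconsRel(v, x, t)`: `x` and `t` represent the head and the tail of `v`, with the junk values
zero and nil if `v` represents the empty list. -/
def unconsRel : RelName := 3

/-- `objRel(x)`: `x` represents a number or a list. -/
def objRel : RelName := 4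

/-- `startRel(x)`: the program is to be run on the number represented by `x`. -/
def startRel : RelName := 5

/-- `evalRel c (v, w)`: the program `c` maps the list represented by `v` to the one represented
by `w`. -/
def evalRel (c : ToPartrec.Code) : RelName := codeIndex c + 6

/-- The tgds axiomatizing numbers and lists; they force enough existence of successors and lists
for all tgds describing evaluation to be full. -/
def listRules : List TGD :=
  [⟨[⟨zeroRel, [0]⟩], [⟨objRel, [0]⟩, ⟨unconsRel, [0, 0, 0]⟩]⟩,
   ⟨[⟨succRel, [0, 1]⟩], [⟨objRel, [1]⟩]⟩,
   ⟨[⟨consRel, [0, 1, 2]⟩], [⟨objRel, [2]⟩, ⟨unconsRel, [2, 0, 1]⟩]⟩,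
   ⟨[⟨objRel, [0]⟩], [⟨succRel, [0, 1]⟩]⟩,
   ⟨[⟨objRel, [0]⟩, ⟨objRel, [1]⟩], [⟨consRel, [0, 1, 2]⟩]⟩]

/-- The full tgds defining the evaluation relation of a program from those of its immediate
subprograms. Throughout, variable 0 is the input and variable 1 the output. -/
def stepRules : ToPartrec.Code → List TGD
  | zero' => [⟨[⟨zeroRel, [2]⟩, ⟨consRel, [2, 0, 1]⟩], [⟨evalRel zero', [0, 1]⟩]⟩]
  | succ =>
    [⟨[⟨unconsRel, [0, 2, 3]⟩, ⟨succRel, [2, 4]⟩, ⟨zeroRel, [5]⟩, ⟨consRel, [4, 5, 1]⟩],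
      [⟨evalRel succ, [0, 1]⟩]⟩]
  | tail => [⟨[⟨unconsRel, [0, 2, 1]⟩], [⟨evalRel tail, [0, 1]⟩]⟩]
  | cons f fs =>
    [⟨[⟨evalRel f, [0, 2]⟩, ⟨unconsRel, [2, 3, 4]⟩, ⟨evalRel fs, [0, 5]⟩, ⟨consRel, [3, 5, 1]⟩],
      [⟨evalRel (cons f fs), [0, 1]⟩]⟩]
  | comp f g =>
    [⟨[⟨evalRel g, [0, 2]⟩, ⟨evalRel f, [2, 1]⟩], [⟨evalRel (comp f g), [0, 1]⟩]⟩]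
  | case f g =>
    [⟨[⟨unconsRel, [0, 2, 3]⟩, ⟨zeroRel, [2]⟩, ⟨evalRel f, [3, 1]⟩],
      [⟨evalRel (case f g), [0, 1]⟩]⟩,
     ⟨[⟨unconsRel, [0, 2, 3]⟩, ⟨succRel, [4, 2]⟩, ⟨consRel, [4, 3, 5]⟩, ⟨evalRel g, [5, 1]⟩],
      [⟨evalRel (case f g), [0, 1]⟩]⟩]
  | fix f =>
    [⟨[⟨evalRel f, [0, 2]⟩, ⟨unconsRel, [2, 3, 1]⟩, ⟨zeroRel, [3]⟩],
      [⟨evalRel (fix f), [0, 1]⟩]⟩,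
     ⟨[⟨evalRel f, [0, 2]⟩, ⟨unconsRel, [2, 3, 4]⟩, ⟨succRel, [5, 3]⟩,
        ⟨evalRel (fix f), [4, 1]⟩],
      [⟨evalRel (fix f), [0, 1]⟩]⟩]

/-- The program itself and all its proper subprograms. -/
def subprograms : ToPartrec.Code → List ToPartrec.Code
  | cons f fs => cons f fs :: (subprograms f ++ subprograms fs)
  | comp f g => comp f g :: (subprograms f ++ subprograms g)
  | case f g => case f g :: (subprograms f ++ subprograms g)
  | fix f => fix f :: subprograms f
  | c => [c]

/-- The tgds defining numbers, lists and the evaluation relation of `c`. -/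
def evalRules (c : ToPartrec.Code) : List TGD :=
  listRules ++ (subprograms c).flatMap stepRules

/-- The query asking whether `c` halts on the start number. -/
def haltQuery (c : ToPartrec.Code) : BCQ :=
  [⟨startRel, [0]⟩, ⟨zeroRel, [1]⟩, ⟨consRel, [0, 1, 2]⟩, ⟨evalRel c, [2, 3]⟩]

/-- The facts representing the numbers up to the start number `n`. -/
def input (n : ℕ) : FinInst :=
  (zeroRel, [0]) :: (startRel, [n]) :: (List.range n).map fun i => (succRel, [i, i + 1])

theorem fullTGD_of_mem_stepRules {c : ToPartrec.Code} {t : TGD} (ht : t ∈ stepRules c) :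
    FullTGD t := by
  have vars_subset : ∀ c, ∀ t ∈ stepRules c,
      t.head.flatMap Atom.args ⊆ t.body.flatMap Atom.args := by
    rintro (_ | _) <;> simp [stepRules]
  intro a ha v hv
  exact List.mem_flatMap.1 (vars_subset c t ht (List.mem_flatMap_of_mem ha hv))

/-- The assignment mapping variable `i` to the `i`-th entry of `l`. -/
def tuple (l : List Val) : Var → Val := fun i => l.getD i 0

theorem mem_evalRel_of_satTGD {M : Instance} {c : ToPartrec.Code} {body : List Atom} (l : List Val)
    (ht : ⟨body, [⟨evalRel c, [0, 1]⟩]⟩ ∈ stepRules c) (hM : ∀ t ∈ stepRules c, satTGD M t)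
    (hbody : ∀ a ∈ body, holdsAtom M (tuple l) a) : [tuple l 0, tuple l 1] ∈ M (evalRel c) :=
  holdsAtom_of_fullTGD (fullTGD_of_mem_stepRules ht) (hM _ ht) hbody (List.mem_singleton_self _)

/-- The intended instance for the start number `n`: a value represents both itself as a number and
the list it encodes. -/
def standardModel (n : ℕ) : Instance := fun R => {s | match R, s with
  | 0, [z] => z = 0
  | 1, [x, y] => y = x + 1
  | 2, [x, l, w] => ofNat (List ℕ) w = x :: ofNat (List ℕ) l
  | 3, [v, x, t] => x = (ofNat (List ℕ) v).headI ∧ ofNat (List ℕ) t = (ofNat (List ℕ) v).tail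
  | 4, [_] => True
  | 5, [x] => x = n
  | i + 6, [v, w] => ∃ c, codeIndex c = i ∧ ofNat (List ℕ) w ∈ c.eval (ofNat (List ℕ) v)
  | _, _ => False}

section StandardModel

variable {n : ℕ} {x y z v w t l : Val}

@[simp] theorem mem_standardModel_zeroRel : [z] ∈ standardModel n zeroRel ↔ z = 0 := Iff.rfl

@[simp] theorem mem_standardModel_succRel : [x, y] ∈ standardModel n succRel ↔ y = x + 1 := Iff.rfl

@[simp] theorem mem_standardModel_consRel : [x, l, w] ∈ standardModel n consRel ↔
    ofNat (List ℕ) w = x :: ofNat (List ℕ) l := Iff.rfl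

@[simp] theorem mem_standardModel_unconsRel : [v, x, t] ∈ standardModel n unconsRel ↔
    x = (ofNat (List ℕ) v).headI ∧ ofNat (List ℕ) t = (ofNat (List ℕ) v).tail := Iff.rfl

@[simp] theorem mem_standardModel_objRel : [x] ∈ standardModel n objRel := trivial

@[simp] theorem mem_standardModel_startRel : [x] ∈ standardModel n startRel ↔ x = n := Iff.rfl

@[simp] theorem mem_standardModel_evalRel {c : ToPartrec.Code} :
    [v, w] ∈ standardModel n (evalRel c) ↔ ofNat (List ℕ) w ∈ c.eval (ofNat (List ℕ) v) := by
  change (∃ d, codeIndex d = codeIndex c ∧ _) ↔ _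
  simp [codeIndex_inj]

theorem satTGD_standardModel_of_mem_listRules {t : TGD} (ht : t ∈ listRules) :
    satTGD (standardModel n) t := by
  revert t
  simp only [listRules, List.forall_mem_cons]
  refine ⟨satTGD_of_forall ?_, satTGD_of_forall ?_, satTGD_of_forall ?_, ?_, ?_, by simp⟩
  · simp +contextual [holdsAtom]
  · simp [holdsAtom]
  · simp +contextual [holdsAtom]
  · exact fun ν _ => ⟨Function.update ν 1 (ν 0 + 1), by simp [TGD.bodyVar], by simp [holdsAtom]⟩
  · exact fun ν _ => ⟨Function.update ν 2 (encode (ν 0 :: ofNat (List ℕ) (ν 1))),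
      by simp +contextual [TGD.bodyVar, or_imp], by simp [holdsAtom]⟩

theorem satTGD_standardModel_of_mem_stepRules {c : ToPartrec.Code} {t : TGD}
    (ht : t ∈ stepRules c) : satTGD (standardModel n) t := by
  suffices sound : ∀ t ∈ stepRules c, ∀ ν : Var → Val,
      (∀ a ∈ t.body, holdsAtom (standardModel n) ν a) →
        ∀ a ∈ t.head, holdsAtom (standardModel n) ν a from satTGD_of_forall (sound t ht)
  cases c <;>
    simp only [stepRules, holdsAtom, List.forall_mem_cons, List.not_mem_nil, false_implies,
      implies_true, and_true, List.map_cons, List.map_nil, mem_standardModel_evalRel,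
      mem_standardModel_unconsRel, mem_standardModel_consRel, mem_standardModel_zeroRel,
      mem_standardModel_succRel]
  case zero' => simp +contextual
  case succ => simp +contextual
  case tail => simp +contextual
  case cons f fs =>
    rintro ν ⟨ha, ⟨hx, -⟩, hb, hw⟩
    exact mem_cons_eval_iff.2 ⟨_, ha, _, hb, hx ▸ hw⟩
  case comp f g =>
    rintro ν ⟨ha, hb⟩
    exact mem_comp_eval_iff.2 ⟨_, ha, hb⟩
  case case f g =>
    constructor
    · rintro ν ⟨⟨hx, ht⟩, hz, hr⟩
      exact mem_case_eval_iff.2 (Or.inl ⟨hx ▸ hz, ht ▸ hr⟩)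
    · rintro ν ⟨⟨hx, ht⟩, hs, hu, hr⟩
      exact mem_case_eval_iff.2 (Or.inr ⟨ν 4, hx ▸ hs, ht ▸ hu ▸ hr⟩)
  case fix f =>
    constructor
    · rintro ν ⟨hw, ⟨hx, ht⟩, hz⟩
      exact mem_fix_eval_iff.2 ⟨_, hw, Or.inl ⟨hx ▸ hz, ht⟩⟩
    · rintro ν ⟨hw, ⟨hx, ht⟩, hs, hr⟩
      exact mem_fix_eval_iff.2 ⟨_, hw, Or.inr ⟨hx ▸ hs ▸ Nat.succ_ne_zero _, ht ▸ hr⟩⟩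

theorem satTGD_standardModel_of_mem_evalRules {c : ToPartrec.Code} {t : TGD}
    (ht : t ∈ evalRules c) : satTGD (standardModel n) t := by
  rcases List.mem_append.1 ht with ht | ht
  · exact satTGD_standardModel_of_mem_listRules ht
  · obtain ⟨d, -, ht⟩ := List.mem_flatMap.1 ht
    exact satTGD_standardModel_of_mem_stepRules ht

theorem toInstance_input_le_standardModel : toInstance (input n) ≤ standardModel n := by
  intro R s hs
  simp only [toInstance, input, Set.mem_ofPred_eq, List.mem_cons, List.mem_map, Prod.mk.injEq] at hs
  obtain ⟨rfl, rfl⟩ | ⟨rfl, rfl⟩ | ⟨i, -, rfl, rfl⟩ := hs <;> simp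

theorem eval_dom_of_holdsBCQ_standardModel {c : ToPartrec.Code}
    (h : holdsBCQ (standardModel n) (haltQuery c)) : (c.eval [n]).Dom := by
  obtain ⟨ν, hν⟩ := h
  simp only [haltQuery, List.forall_mem_cons, holdsAtom, List.map_cons, List.map_nil,
    mem_standardModel_startRel, mem_standardModel_zeroRel, mem_standardModel_consRel,
    mem_standardModel_evalRel] at hν
  obtain ⟨hstart, hzero, hcons, heval, -⟩ := hν
  rw [hstart, hzero, list_ofNat_zero] at hcons
  rw [hcons] at heval
  exact Part.dom_iff_mem.2 ⟨_, heval⟩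

end StandardModel

section Representation

/-- `RepNum M n a`: the value `a` represents the number `n` in `M`. A value may represent several
numbers, and a number may have several representatives. -/
inductive RepNum (M : Instance) : ℕ → Val → Prop
  | zero {a : Val} : [a] ∈ M zeroRel → RepNum M 0 a
  | succ {n : ℕ} {a b : Val} : RepNum M n a → [a, b] ∈ M succRel → RepNum M (n + 1) b

/-- `RepList M l a`: the value `a` represents the list `l` in `M`. -/
inductive RepList (M : Instance) : List ℕ → Val → Prop
  | nil {a : Val} : [a] ∈ M zeroRel → RepList M [] a
  | cons {x : ℕ} {l : List ℕ} {b t a : Val} :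
      RepNum M x b → RepList M l t → [b, t, a] ∈ M consRel → RepList M (x :: l) a

/-- The first-order meaning of `listRules`. -/
structure IsListModel (M : Instance) : Prop where
  obj_of_zero {z : Val} : [z] ∈ M zeroRel → [z] ∈ M objRel
  uncons_of_zero {z : Val} : [z] ∈ M zeroRel → [z, z, z] ∈ M unconsRel
  obj_of_succ {x y : Val} : [x, y] ∈ M succRel → [y] ∈ M objRel
  obj_of_cons {x l w : Val} : [x, l, w] ∈ M consRel → [w] ∈ M objRel
  uncons_of_cons {x l w : Val} : [x, l, w] ∈ M consRel → [w, x, l] ∈ M unconsRel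
  exists_succ {x : Val} : [x] ∈ M objRel → ∃ y, [x, y] ∈ M succRel
  exists_cons {x l : Val} : [x] ∈ M objRel → [l] ∈ M objRel → ∃ w, [x, l, w] ∈ M consRel

theorem isListModel_of_satTGD {M : Instance} (hM : ∀ t ∈ listRules, satTGD M t) :
    IsListModel M := by
  simp only [listRules, List.forall_mem_cons] at hM
  obtain ⟨zero_rule, succ_rule, cons_rule, exists_succ_rule, exists_cons_rule, -⟩ := hM
  have of_zero {z : Val} (hz : [z] ∈ M zeroRel) := fun a =>
    holdsAtom_of_fullTGD (a := a) (ν := tuple [z]) (by simp [FullTGD, TGD.bodyVar]) zero_rule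
      (List.forall_mem_singleton.2 hz)
  have of_cons {x l w : Val} (hw : [x, l, w] ∈ M consRel) := fun a =>
    holdsAtom_of_fullTGD (a := a) (ν := tuple [x, l, w]) (by simp [FullTGD, TGD.bodyVar]) cons_rule
      (List.forall_mem_singleton.2 hw)
  refine ⟨fun hz => of_zero hz ⟨objRel, [0]⟩ (by simp),
    fun hz => of_zero hz ⟨unconsRel, [0, 0, 0]⟩ (by simp), fun {x y} hxy => ?_,
    fun hw => of_cons hw ⟨objRel, [2]⟩ (by simp),
    fun hw => of_cons hw ⟨unconsRel, [2, 0, 1]⟩ (by simp), fun {x} hx => ?_,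
    fun {x l} hx hl => ?_⟩
  · exact holdsAtom_of_fullTGD (a := ⟨objRel, [1]⟩) (ν := tuple [x, y])
      (by simp [FullTGD, TGD.bodyVar]) succ_rule (List.forall_mem_singleton.2 hxy) (by simp)
  · obtain ⟨ν, hν, hhead⟩ := exists_succ_rule (tuple [x]) (List.forall_mem_singleton.2 hx)
    have hx : ν 0 = x := hν 0 (by simp [TGD.bodyVar])
    exact ⟨ν 1, hx ▸ hhead _ (List.mem_singleton_self _)⟩
  · obtain ⟨ν, hν, hhead⟩ := exists_cons_rule (tuple [x, l])
      (List.forall_mem_cons.2 ⟨hx, List.forall_mem_singleton.2 hl⟩)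
    have hx : ν 0 = x := hν 0 (by simp [TGD.bodyVar])
    have hl : ν 1 = l := hν 1 (by simp [TGD.bodyVar])
    exact ⟨ν 2, hx ▸ hl ▸ hhead _ (List.mem_singleton_self _)⟩

variable {M : Instance}

theorem RepNum.mem_objRel (hM : IsListModel M) {n : ℕ} {a : Val} (h : RepNum M n a) :
    [a] ∈ M objRel := by
  cases h with
  | zero ha => exact hM.obj_of_zero ha
  | succ _ ha => exact hM.obj_of_succ ha

theorem RepList.mem_objRel (hM : IsListModel M) {l : List ℕ} {a : Val} (h : RepList M l a) :
    [a] ∈ M objRel := by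
  cases h with
  | nil ha => exact hM.obj_of_zero ha
  | cons _ _ ha => exact hM.obj_of_cons ha

theorem RepList.exists_mem_zeroRel {l : List ℕ} {a : Val} (h : RepList M l a) :
    ∃ z, [z] ∈ M zeroRel := by
  induction h with
  | nil ha => exact ⟨_, ha⟩
  | cons _ _ _ ih => exact ih

theorem RepList.exists_mem_unconsRel (hM : IsListModel M) {l : List ℕ} {a : Val}
    (h : RepList M l a) :
    ∃ b t, RepNum M l.headI b ∧ RepList M l.tail t ∧ [a, b, t] ∈ M unconsRel := by
  cases h with
  | nil ha => exact ⟨a, a, .zero ha, .nil ha, hM.uncons_of_zero ha⟩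
  | cons hx hl ha => exact ⟨_, _, hx, hl, hM.uncons_of_cons ha⟩

theorem RepNum.exists_mem_succRel (hM : IsListModel M) {n : ℕ} {a : Val} (h : RepNum M n a) :
    ∃ b, RepNum M (n + 1) b ∧ [a, b] ∈ M succRel := by
  obtain ⟨b, hb⟩ := hM.exists_succ (h.mem_objRel hM)
  exact ⟨b, .succ h hb, hb⟩

theorem RepList.exists_mem_consRel (hM : IsListModel M) {x : ℕ} {l : List ℕ} {b a : Val}
    (hl : RepList M l a) (hx : RepNum M x b) :
    ∃ w, RepList M (x :: l) w ∧ [b, a, w] ∈ M consRel := by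
  obtain ⟨w, hw⟩ := hM.exists_cons (hx.mem_objRel hM) (hl.mem_objRel hM)
  exact ⟨w, .cons hx hl hw, hw⟩

/-- The evaluation relation of `c` in `M` covers all results of `c`. -/
def Covers (M : Instance) (c : ToPartrec.Code) : Prop :=
  ∀ ⦃v r : List ℕ⦄ ⦃a : Val⦄, RepList M v a → r ∈ c.eval v →
    ∃ b, RepList M r b ∧ [a, b] ∈ M (evalRel c)

theorem covers_zero' (hM : IsListModel M) (hc : ∀ t ∈ stepRules zero', satTGD M t) :
    Covers M zero' := by
  intro v r a ha hr
  obtain rfl : r = 0 :: v := by simpa using hr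
  obtain ⟨z, hz⟩ := ha.exists_mem_zeroRel
  obtain ⟨b, hb, hzab⟩ := ha.exists_mem_consRel hM (.zero hz)
  exact ⟨b, hb, mem_evalRel_of_satTGD [a, b, z] (List.mem_cons_self ..) hc
    (by simp [holdsAtom, tuple, *])⟩

theorem covers_succ (hM : IsListModel M) (hc : ∀ t ∈ stepRules succ, satTGD M t) :
    Covers M succ := by
  intro v r a ha hr
  obtain rfl : r = [v.headI + 1] := by simpa using hr
  obtain ⟨z, hz⟩ := ha.exists_mem_zeroRel
  obtain ⟨x, t, hx, -, haxt⟩ := ha.exists_mem_unconsRel hM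
  obtain ⟨y, hy, hxy⟩ := hx.exists_mem_succRel hM
  obtain ⟨b, hb, hyzb⟩ := (RepList.nil hz).exists_mem_consRel hM hy
  exact ⟨b, hb, mem_evalRel_of_satTGD [a, b, x, t, y, z] (List.mem_cons_self ..) hc
    (by simp [holdsAtom, tuple, *])⟩

theorem covers_tail (hM : IsListModel M) (hc : ∀ t ∈ stepRules tail, satTGD M t) :
    Covers M tail := by
  intro v r a ha hr
  obtain rfl : r = v.tail := by simpa using hr
  obtain ⟨x, b, -, hb, haxb⟩ := ha.exists_mem_unconsRel hM
  exact ⟨b, hb, mem_evalRel_of_satTGD [a, b, x] (List.mem_cons_self ..) hc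
    (by simp [holdsAtom, tuple, *])⟩

variable {f g : ToPartrec.Code}

theorem covers_cons (hM : IsListModel M) (hc : ∀ t ∈ stepRules (cons f g), satTGD M t)
    (hf : Covers M f) (hg : Covers M g) : Covers M (cons f g) := by
  intro v r a ha hr
  obtain ⟨u, hu, w, hw, rfl⟩ := mem_cons_eval_iff.1 hr
  obtain ⟨p, hp, hap⟩ := hf ha hu
  obtain ⟨x, t, hx, -, hpxt⟩ := hp.exists_mem_unconsRel hM
  obtain ⟨q, hq, haq⟩ := hg ha hw
  obtain ⟨b, hb, hxqb⟩ := hq.exists_mem_consRel hM hx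
  exact ⟨b, hb, mem_evalRel_of_satTGD [a, b, p, x, t, q] (List.mem_cons_self ..) hc
    (by simp [holdsAtom, tuple, *])⟩

theorem covers_comp (hc : ∀ t ∈ stepRules (comp f g), satTGD M t)
    (hf : Covers M f) (hg : Covers M g) : Covers M (comp f g) := by
  intro v r a ha hr
  obtain ⟨u, hu, hr⟩ := mem_comp_eval_iff.1 hr
  obtain ⟨p, hp, hap⟩ := hg ha hu
  obtain ⟨b, hb, hpb⟩ := hf hp hr
  exact ⟨b, hb, mem_evalRel_of_satTGD [a, b, p] (List.mem_cons_self ..) hc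
    (by simp [holdsAtom, tuple, *])⟩

theorem covers_case (hM : IsListModel M) (hc : ∀ t ∈ stepRules (case f g), satTGD M t)
    (hf : Covers M f) (hg : Covers M g) : Covers M (case f g) := by
  intro v r a ha hr
  obtain ⟨x, t, hx, ht, haxt⟩ := ha.exists_mem_unconsRel hM
  rcases mem_case_eval_iff.1 hr with ⟨h0, hr⟩ | ⟨n, hn, hr⟩
  · rw [h0] at hx
    obtain ⟨hx⟩ := hx
    obtain ⟨b, hb, htb⟩ := hf ht hr
    exact ⟨b, hb, mem_evalRel_of_satTGD [a, b, x, t] (List.mem_cons_self ..) hc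
      (by simp [holdsAtom, tuple, *])⟩
  · rw [hn] at hx
    obtain - | @⟨_, y, _, hy, hyx⟩ := hx
    obtain ⟨u, hu, hytu⟩ := ht.exists_mem_consRel hM hy
    obtain ⟨b, hb, hub⟩ := hg hu hr
    exact ⟨b, hb, mem_evalRel_of_satTGD [a, b, x, t, y, u]
      (List.mem_cons_of_mem _ (List.mem_cons_self ..)) hc (by simp [holdsAtom, tuple, *])⟩

theorem covers_fix (hM : IsListModel M) (hc : ∀ t ∈ stepRules (fix f), satTGD M t)
    (hf : Covers M f) : Covers M (fix f) := by
  intro v r a ha hr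
  refine fix_eval_induction (C := fun v => ∀ ⦃a⦄, RepList M v a →
    ∃ b, RepList M r b ∧ [a, b] ∈ M (evalRel (fix f))) hr ?_ ?_ ha
  · intro v w hw h0 hr a ha
    obtain ⟨p, hp, hap⟩ := hf ha hw
    obtain ⟨x, b, hx, hb, hpxb⟩ := hp.exists_mem_unconsRel hM
    rw [h0] at hx
    obtain ⟨hx⟩ := hx
    exact ⟨b, hr ▸ hb, mem_evalRel_of_satTGD [a, b, p, x] (List.mem_cons_self ..) hc
      (by simp [holdsAtom, tuple, *])⟩
  · intro v w hw h0 ih a ha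
    obtain ⟨p, hp, hap⟩ := hf ha hw
    obtain ⟨x, t, hx, ht, hpxt⟩ := hp.exists_mem_unconsRel hM
    obtain ⟨n, hn⟩ := Nat.exists_eq_succ_of_ne_zero h0
    rw [hn] at hx
    obtain - | @⟨_, y, _, hy, hyx⟩ := hx
    obtain ⟨b, hb, htb⟩ := ih ht
    exact ⟨b, hb, mem_evalRel_of_satTGD [a, b, p, x, t, y]
      (List.mem_cons_of_mem _ (List.mem_cons_self ..)) hc (by simp [holdsAtom, tuple, *])⟩

theorem covers_of_satTGD {c : ToPartrec.Code} (hM : IsListModel M)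
    (hc : ∀ d ∈ subprograms c, ∀ t ∈ stepRules d, satTGD M t) : Covers M c := by
  induction c with
  | zero' => exact covers_zero' hM (hc _ (List.mem_singleton_self _))
  | succ => exact covers_succ hM (hc _ (List.mem_singleton_self _))
  | tail => exact covers_tail hM (hc _ (List.mem_singleton_self _))
  | cons f g hf hg =>
    obtain ⟨hself, hsub⟩ := List.forall_mem_cons.1 hc
    obtain ⟨hsub_f, hsub_g⟩ := List.forall_mem_append.1 hsub
    exact covers_cons hM hself (hf hsub_f) (hg hsub_g)
  | comp f g hf hg =>
    obtain ⟨hself, hsub⟩ := List.forall_mem_cons.1 hc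
    obtain ⟨hsub_f, hsub_g⟩ := List.forall_mem_append.1 hsub
    exact covers_comp hself (hf hsub_f) (hg hsub_g)
  | case f g hf hg =>
    obtain ⟨hself, hsub⟩ := List.forall_mem_cons.1 hc
    obtain ⟨hsub_f, hsub_g⟩ := List.forall_mem_append.1 hsub
    exact covers_case hM hself (hf hsub_f) (hg hsub_g)
  | fix f hf =>
    obtain ⟨hself, hsub⟩ := List.forall_mem_cons.1 hc
    exact covers_fix hM hself (hf hsub)

theorem IsHom.mem_zeroRel_input {n : ℕ} {h : Val → Val} (hh : IsHom h (toInstance (input n)) M) :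
    [h 0] ∈ M zeroRel :=
  hh zeroRel [0] (List.mem_cons_self ..)

theorem IsHom.mem_startRel_input {n : ℕ} {h : Val → Val} (hh : IsHom h (toInstance (input n)) M) :
    [h n] ∈ M startRel :=
  hh startRel [n] (List.mem_cons_of_mem _ (List.mem_cons_self ..))

theorem IsHom.repNum_input {n : ℕ} {h : Val → Val} (hh : IsHom h (toInstance (input n)) M) {i : ℕ}
    (hi : i ≤ n) : RepNum M i (h i) := by
  induction i with
  | zero => exact .zero hh.mem_zeroRel_input
  | succ i ih =>
    have hmem : (succRel, [i, i + 1]) ∈ input n :=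
      List.mem_cons_of_mem _ (List.mem_cons_of_mem _
        (List.mem_map_of_mem (f := fun i => (succRel, [i, i + 1])) (List.mem_range.2 hi)))
    exact .succ (ih (Nat.le_of_succ_le hi)) (hh _ _ hmem)

theorem holdsBCQ_haltQuery_of_eval_dom {c : ToPartrec.Code} {n : ℕ} {h : Val → Val}
    (hh : IsHom h (toInstance (input n)) M) (hM : ∀ t ∈ evalRules c, satTGD M t)
    (hdom : (c.eval [n]).Dom) : holdsBCQ M (haltQuery c) := by
  obtain ⟨hlist, hstep⟩ := List.forall_mem_append.1 hM
  have isListModel := isListModel_of_satTGD hlist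
  have covers : Covers M c := covers_of_satTGD isListModel fun d hd t ht =>
    hstep t (List.mem_flatMap.2 ⟨d, hd, ht⟩)
  obtain ⟨w, hw, hcons⟩ := (RepList.nil hh.mem_zeroRel_input).exists_mem_consRel isListModel
    (hh.repNum_input le_rfl)
  obtain ⟨r, hr⟩ := Part.dom_iff_mem.1 hdom
  obtain ⟨b, -, heval⟩ := covers hw hr
  refine ⟨tuple [h n, h 0, w, b], ?_⟩
  simp [haltQuery, holdsAtom, tuple, hh.mem_startRel_input, hh.mem_zeroRel_input, hcons, heval]

end Representation

theorem isReady_input_iff {c : ToPartrec.Code} {n : ℕ} :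
    IsReady (simProcs (evalRules c)) (goalTGD (haltQuery c)) (currentInput (input n)) ↔
      (c.eval [n]).Dom :=
  ⟨fun h => eval_dom_of_holdsBCQ_standardModel <|
      h.holdsBCQ_of_model toInstance_input_le_standardModel
        fun _ => satTGD_standardModel_of_mem_evalRules,
    fun h => isReady_of_forall_model fun _ _ hf hM => holdsBCQ_haltQuery_of_eval_dom hf hM h⟩

theorem computable_currentInput_input : Computable fun n => currentInput (input n) := by
  have fact_primrec : Primrec fun i : ℕ => (current succRel, [i, i + 1]) :=
    (Primrec.const _).pair
      (Primrec.list_cons.comp .id (Primrec.list_cons.comp .succ (.const [])))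
  have start_primrec : Primrec fun n : ℕ => (current startRel, [n]) :=
    (Primrec.const _).pair (Primrec.list_cons.comp .id (.const []))
  have facts_primrec : Primrec fun n : ℕ =>
      (List.range n).map fun i => (current succRel, [i, i + 1]) :=
    Primrec.list_map Primrec.list_range (fact_primrec.comp .snd)
  have input_primrec := Primrec.list_cons.comp (.const (current zeroRel, [0]))
    (Primrec.list_cons.comp start_primrec facts_primrec)
  exact (input_primrec.of_eq fun n => by simp [currentInput, input, Function.comp_def]).to_comp

theorem exists_not_computablePred_isReady :
    ∃ c, ¬ ComputablePred (IsReady (simProcs (evalRules c)) (goalTGD (haltQuery c))) := by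
  obtain ⟨c, hc⟩ := exists_code_not_computablePred
  exact ⟨c, fun h => hc (ComputablePred.computable_of_manyOneReducible
    ⟨_, computable_currentInput_input, fun _ => isReady_input_iff.symm⟩ h)⟩

end Encoding

end ConstraintReadiness

/-- Constraint readiness is undecidable: there are a finite set `Π` of
procedures with safe scope (given by their acyclic tgd postconditions) and a
single acyclic tgd `σ` such that no algorithm decides, given a finite instance
`I`, whether some finite sequence of procedures from `Π` yields an outcome set
all of whose instances satisfy `σ`. -/
theorem constraint_readiness_undecidable :
    ∃ (Pi : List (List TGD)) (σ : TGD),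
      (∀ Γ ∈ Pi, AcyclicTGDs Γ) ∧
      (∀ a ∈ σ.body, ∀ b ∈ σ.head, a.rel ≠ b.rel) ∧
      ¬ ComputablePred (fun L : FinInst =>
          ∃ seq : List (List TGD), (∀ Γ ∈ seq, Γ ∈ Pi) ∧
            ∀ J ∈ safeSeqOutcomes seq (toInstance L), satTGD J σ) := by
  obtain ⟨c, hc⟩ := ConstraintReadiness.exists_not_computablePred_isReady
  exact ⟨_, _, ConstraintReadiness.acyclicTGDs_of_mem_simProcs _,
    fun _ ha => absurd ha List.not_mem_nil, hc⟩
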